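/- Let k be a field of characteristic 0 and B a normal affine k-domain graded over k by a finitely generated abelian group G. If B is saturated in codimension 1, then 𝒳(B) = ∅ or 𝒳(B) = 𝕋(B). -/

import Mathlib

noncomputable section

/-- A derivation is locally nilpotent. -/
def IsLND {R : Type*} [CommRing R] (D : Derivation ℤ R R) : Prop :=
  ∀ b : R, ∃ n : ℕ, 0 < n ∧ (⇑D)^[n] b = 0

/-- Kernel of a derivation, as a subring. -/
def kerDer {R : Type*} [CommRing R] (D : Derivation ℤ R R) : Subring R where
  carrier := {x | D x = 0}
  one_mem' := by simp
  mul_mem' := by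
    intro a b ha hb
    simp only [Set.mem_setOf_eq] at *
    rw [Derivation.leibniz, ha, hb]
    simp
  add_mem' := by
    intro a b ha hb
    simp only [Set.mem_setOf_eq] at *
    rw [map_add, ha, hb, add_zero]
  zero_mem' := by simp
  neg_mem' := by
    intro a ha
    simp only [Set.mem_setOf_eq] at *
    rw [map_neg, ha, neg_zero]

section Graded

variable {G : Type*} [AddCommGroup G] {B : Type*} [CommRing B]

/-- The Veronese subring `B^{(H)} = ⊕_{i ∈ H} B_i` of a `G`-graded ring,
realized as the subring generated by the homogeneous elements whose degree lies in `H`. -/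
def verSub (𝒜 : G → AddSubgroup B) (H : AddSubgroup G) : Subring B :=
  Subring.closure (⋃ i ∈ (H : Set G), (𝒜 i : Set B))

/-- 𝔾(B): the subgroup of G generated by the degrees of nonzero homogeneous elements. -/
def Gsub (𝒜 : G → AddSubgroup B) : AddSubgroup G :=
  AddSubgroup.closure { i : G | 𝒜 i ≠ ⊥ }

/-- `H ∈ 𝕋(B)`: the quotient `𝔾(B)/(H ∩ 𝔾(B))` is torsion. -/
def Tmem (𝒜 : G → AddSubgroup B) (H : AddSubgroup G) : Prop :=
  ∀ g ∈ Gsub 𝒜, ∃ n : ℕ, 0 < n ∧ n • g ∈ H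

/-- A homogeneous derivation of `B`. -/
def IsHomogDer (𝒜 : G → AddSubgroup B) (D : Derivation ℤ B B) : Prop :=
  ∃ d : G, ∀ (i : G) (x : B), x ∈ 𝒜 i → D x ∈ 𝒜 (i + d)

/-- A homogeneous derivation of a graded subring `S` of `B`. -/
def IsHomogDerOn (𝒜 : G → AddSubgroup B) (S : Subring B) (D : Derivation ℤ S S) : Prop :=
  ∃ d : G, ∀ (i : G) (x : S), (x : B) ∈ 𝒜 i → ((D x : S) : B) ∈ 𝒜 (i + d)

/-- 𝕄̄(B,p): the subgroup of G generated by the degrees i with B_i ⊄ p. -/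
def Mbar (𝒜 : G → AddSubgroup B) (p : Ideal B) : AddSubgroup G :=
  AddSubgroup.closure { i : G | ¬ (𝒜 i : Set B) ⊆ (p : Set B) }

/-- A prime ideal of height 1. -/
def heightOne {R : Type*} [CommRing R] (p : Ideal R) : Prop :=
  p.IsPrime ∧ (∃ q : Ideal R, q.IsPrime ∧ q < p) ∧
    ∀ q r : Ideal R, q.IsPrime → r.IsPrime → q < r → r < p → False

open Classical in
/-- 𝔾̄(B). -/
def Gbar (𝒜 : G → AddSubgroup B) : AddSubgroup G :=
  if ∃ p : Ideal B, heightOne p then ⨅ p : {p : Ideal B // heightOne p}, Mbar 𝒜 p.1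
  else Gsub 𝒜

end Graded

/-- 𝒳(B): the set of H ∈ 𝕋(B) with HLND(B^{(H)}) ≠ {0}. -/
def Xset {G : Type*} [AddCommGroup G] {B : Type*} [CommRing B]
    (𝒜 : G → AddSubgroup B) : Set (AddSubgroup G) :=
  { H | Tmem 𝒜 H ∧ ∃ D : Derivation ℤ (verSub 𝒜 H) (verSub 𝒜 H),
      IsLND D ∧ IsHomogDerOn 𝒜 (verSub 𝒜 H) D ∧ D ≠ 0 }

/-!
If `H ∈ 𝕋(B)`, then `B` is integral over `B^{(H)}`, so a homogeneous locally nilpotent derivation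
of `B^{(H)}` extends to `Frac B`. Being normal and Noetherian, `B` is the intersection of its
localizations at the height-one primes `p`, so the extension preserves `B` if, for each `p` and
each homogeneous `x`, there is a homogeneous `u ∉ p` with `u * x ∈ B^{(H)}`; saturation in
codimension 1 provides such a `u`. The extension stays locally nilpotent since the degree of
`(D x)ⁿ` is smaller by `n` than that of `xⁿ`.

Conversely, let `D` be a nonzero homogeneous locally nilpotent derivation of `B` and `s` a
homogeneous element with `D s ≠ 0 = D (D s)`. Some height-one prime `p` contains `s` and meets
`ker D` only in `0`. Eliminating `s` modulo `p` replaces homogeneous elements outside `p` by kernel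
elements, so by saturation the degrees occurring in `ker D` generate `𝔾(B)`. For every `H ∈ 𝕋(B)`,
a homogeneous kernel multiple of `D` then has its degree in `H` and restricts to a nonzero
derivation of `B^{(H)}`.
-/

section Leibniz

open Finset in
lemma iterate_derivation_mul {R : Type*} [CommRing R] (D : Derivation ℤ R R) (n : ℕ) (x y : R) :
    D^[n] (x * y) = ∑ ij ∈ antidiagonal n, n.choose ij.1 • (D^[ij.1] x * D^[ij.2] y) := by
  induction n with
  | zero => simp
  | succ n ih =>
    rw [sum_antidiagonal_choose_succ_nsmul (fun i j ↦ D^[i] x * D^[j] y),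
      Function.iterate_succ_apply', ih, map_sum, ← sum_add_distrib]
    refine sum_congr rfl fun ij hij ↦ ?_
    rw [← n.choose_symm_of_eq_add (mem_antidiagonal.1 hij).symm, map_nsmul, Derivation.leibniz,
      ← nsmul_add, Function.iterate_succ_apply', Function.iterate_succ_apply', smul_eq_mul,
      smul_eq_mul, mul_comm (D^[ij.2] y)]

variable {R : Type*} [CommRing R] (D : Derivation ℤ R R)

lemma iterate_eq_zero_of_le {x : R} {m n : ℕ} (hmn : m ≤ n) (h : D^[m] x = 0) : D^[n] x = 0 := by
  obtain ⟨c, rfl⟩ := Nat.exists_eq_add_of_le' hmn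
  rw [Function.iterate_add_apply, h, iterate_map_zero]

lemma iterate_derivation_mul_of_succ_eq_zero {m n : ℕ} {x y : R} (hx : D^[m + 1] x = 0)
    (hy : D^[n + 1] y = 0) :
    D^[m + n] (x * y) = (m + n).choose m • (D^[m] x * D^[n] y) := by
  rw [iterate_derivation_mul, Finset.sum_eq_single (m, n)]
  · rintro ⟨i, j⟩ hij hne
    have hsum : i + j = m + n := Finset.HasAntidiagonal.mem_antidiagonal.1 hij
    rcases lt_trichotomy i m with hlt | rfl | hgt
    · rw [iterate_eq_zero_of_le D (show n + 1 ≤ j by lia) hy, mul_zero, smul_zero]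
    · exact absurd (by rw [Nat.add_left_cancel hsum]) hne
    · rw [iterate_eq_zero_of_le D hgt hx, zero_mul, smul_zero]
  · exact fun h ↦ absurd ((Finset.HasAntidiagonal.mem_antidiagonal (a := (m, n))).2 rfl) h

lemma iterate_derivation_mul_of_eq_zero {a : R} (ha : D a = 0) (n : ℕ) (x : R) :
    D^[n] (a * x) = a * D^[n] x := by
  induction n generalizing x with
  | zero => rfl
  | succ n ih =>
    rw [Function.iterate_succ_apply, Derivation.leibniz, ha, smul_zero, add_zero, smul_eq_mul, ih,
      Function.iterate_succ_apply]

lemma iterate_slice_correction {s b : R} {m : ℕ} (hs : D (D s) = 0) (hb : D^[m + 2] b = 0) :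
    D^[m + 1] ((m + 1) • (D s * b) - s * D b) = 0 := by
  have hsDb : D^[m + 1] (s * D b) = (m + 1) • (D s * D^[m + 1] b) := by
    have h := iterate_derivation_mul_of_succ_eq_zero D (m := 1) (n := m) (x := s) (y := D b) hs hb
    rwa [add_comm 1 m, Nat.choose_one_right] at h
  rw [iterate_map_sub, iterate_map_nsmul, iterate_derivation_mul_of_eq_zero D hs, hsDb, sub_self]

end Leibniz

section HasDegree

/-- `x` has degree `n` with respect to `D`, in the sense of the degree function of a locally
nilpotent derivation; encoded as a relation, so that `D` need not be locally nilpotent. -/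
def HasDegree {R : Type*} [CommRing R] (D : Derivation ℤ R R) (x : R) (n : ℕ) : Prop :=
  D^[n] x ≠ 0 ∧ D^[n + 1] x = 0

variable {R : Type*} [CommRing R] {D : Derivation ℤ R R} {x y : R} {m n : ℕ}

lemma exists_hasDegree (hx : x ≠ 0) (h : ∃ n, D^[n] x = 0) : ∃ n, HasDegree D x n :=
  Nat.exists_not_and_succ_of_not_zero_of_exists hx h

namespace HasDegree

lemma le_of_iterate_ne_zero (h : HasDegree D x n) (hm : D^[m] x ≠ 0) : m ≤ n := by
  contrapose! hm
  exact iterate_eq_zero_of_le D hm h.2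

lemma unique (hm : HasDegree D x m) (hn : HasDegree D x n) : m = n :=
  le_antisymm (hn.le_of_iterate_ne_zero hm.1) (hm.le_of_iterate_ne_zero hn.1)

lemma eq_add_one (h : HasDegree D x n) (hx : D x ≠ 0) : ∃ m, n = m + 1 ∧ HasDegree D (D x) m := by
  obtain ⟨m, rfl⟩ := Nat.exists_eq_add_of_le' (h.le_of_iterate_ne_zero (m := 1) hx)
  exact ⟨m, rfl, h⟩

variable [IsDomain R] [CharZero R]

lemma mul (hx : HasDegree D x m) (hy : HasDegree D y n) : HasDegree D (x * y) (m + n) := by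
  constructor
  · rw [iterate_derivation_mul_of_succ_eq_zero D hx.2 hy.2, nsmul_eq_mul]
    exact mul_ne_zero (Nat.cast_ne_zero.2 (Nat.choose_pos (Nat.le_add_right m n)).ne')
      (mul_ne_zero hx.1 hy.1)
  · rw [add_right_comm, iterate_derivation_mul_of_succ_eq_zero D
      (iterate_eq_zero_of_le D (Nat.le_succ _) hx.2) hy.2, hx.2, zero_mul, smul_zero]

lemma pow (hx : HasDegree D x m) (n : ℕ) : HasDegree D (x ^ n) (n * m) := by
  induction n with
  | zero => simp [HasDegree]
  | succ n ih =>
    rw [pow_succ, add_mul, one_mul]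
    exact ih.mul hx

end HasDegree

section Pow

variable [IsDomain R] [CharZero R]

lemma derivation_pow_ne_zero (hn : n ≠ 0) (hx : D x ≠ 0) : D (x ^ n) ≠ 0 := by
  have hx0 : x ≠ 0 := by rintro rfl; exact hx (map_zero D)
  rw [Derivation.leibniz_pow, nsmul_eq_mul]
  exact mul_ne_zero (Nat.cast_ne_zero.2 hn) (mul_ne_zero (pow_ne_zero _ hx0) hx)

/-- Compare degrees in `D (xⁿ)ⁿ = nⁿ · (xⁿ)ⁿ⁻¹ · (D x)ⁿ`. -/
lemma HasDegree.add_eq_of_derivation_pow {N N' : ℕ} (hn : n ≠ 0) (hx : D x ≠ 0)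
    (hN : HasDegree D (x ^ n) N) (hN' : HasDegree D (D x ^ n) N') : N' + n = N := by
  obtain ⟨M, rfl, hM⟩ := hN.eq_add_one (derivation_pow_ne_zero hn hx)
  have hnat : HasDegree D ((n : R) ^ n) 0 := by simp [HasDegree, Derivation.leibniz_pow, hn]
  have hpow : D (x ^ n) ^ n = (n : R) ^ n * ((x ^ n) ^ (n - 1) * D x ^ n) := by
    rw [Derivation.leibniz_pow, nsmul_eq_mul, smul_eq_mul, mul_pow, mul_pow, ← pow_mul, ← pow_mul,
      mul_comm n]
  have hdeg := hM.pow n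
  rw [hpow] at hdeg
  have heq := hdeg.unique (hnat.mul ((hN.pow (n - 1)).mul hN'))
  obtain ⟨n, rfl⟩ := Nat.exists_eq_add_one_of_ne_zero hn
  rw [Nat.add_sub_cancel] at heq
  linarith

lemma exists_iterate_eq_zero_of_pow {S : Set R} (hS : ∀ b ∈ S, D b ∈ S) (hn : n ≠ 0)
    (hpow : ∀ b ∈ S, ∃ l, D^[l] (b ^ n) = 0) {b : R} (hb : b ∈ S) : ∃ m, D^[m] b = 0 := by
  by_cases hb0 : b = 0
  · exact ⟨0, hb0⟩
  obtain ⟨N, hN⟩ := exists_hasDegree (pow_ne_zero n hb0) (hpow b hb)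
  induction N using Nat.strong_induction_on generalizing b with
  | _ N ih =>
    by_cases hDb : D b = 0
    · exact ⟨1, hDb⟩
    obtain ⟨N', hN'⟩ := exists_hasDegree (pow_ne_zero n hDb) (hpow _ (hS b hb))
    have hadd := HasDegree.add_eq_of_derivation_pow hn hDb hN hN'
    obtain ⟨m, hm⟩ := ih N' (by lia) (hS b hb) hDb hN'
    exact ⟨m + 1, hm⟩

end Pow

end HasDegree

section LocallyNilpotent

lemma IsLND.of_semiconj {R S : Type*} [CommRing R] [CommRing S] {D : Derivation ℤ R R}
    {E : Derivation ℤ S S} {f : R →+ S} (hf : Function.Injective f) (h : Function.Semiconj f D E)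
    (hE : IsLND E) : IsLND D := fun b ↦ by
  obtain ⟨n, hn, hb⟩ := hE (f b)
  exact ⟨n, hn, hf (by rw [h.iterate_right n b, hb, map_zero])⟩

variable {R : Type*} [CommRing R] {D : Derivation ℤ R R}

lemma IsLND.exists_iterate_eq_zero (hD : IsLND D) (b : R) : ∃ n, D^[n] b = 0 :=
  (hD b).imp fun _ ↦ And.right

lemma IsLND.of_exists_iterate_eq_zero (h : ∀ b, ∃ n, D^[n] b = 0) : IsLND D := fun b ↦ by
  obtain ⟨n, hn⟩ := h b
  exact ⟨n + 1, n.succ_pos, iterate_eq_zero_of_le D n.le_succ hn⟩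

lemma IsLND.smul_of_eq_zero {a : R} (hD : IsLND D) (ha : D a = 0) : IsLND (a • D) := fun b ↦ by
  obtain ⟨n, hn, hb⟩ := hD b
  have hiter : ∀ m, (a • D)^[m] b = a ^ m * D^[m] b := fun m ↦ by
    induction m with
    | zero => simp
    | succ m ih =>
      have ham : D (a ^ m) = 0 := by rw [Derivation.leibniz_pow, ha, smul_zero, smul_zero]
      rw [Function.iterate_succ_apply', ih, Derivation.smul_apply, Derivation.leibniz, ham,
        smul_zero, add_zero, smul_eq_mul, smul_eq_mul, ← mul_assoc, ← pow_succ',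
        Function.iterate_succ_apply']
  exact ⟨n, hn, by rw [hiter, hb, mul_zero]⟩

variable (D) in
/-- The multiplicative set of regular elements of `R` killed by `D`; for a domain `R` these are
the nonzero elements of the kernel of `D`. -/
def kerNonZeroDivisors : Submonoid R :=
  (kerDer D).toSubmonoid ⊓ nonZeroDivisors R

variable [IsDomain R]

lemma mem_kerNonZeroDivisors {x : R} : x ∈ kerNonZeroDivisors D ↔ D x = 0 ∧ x ≠ 0 :=
  and_congr Iff.rfl mem_nonZeroDivisors_iff_ne_zero

lemma IsLND.disjoint_span_kerNonZeroDivisors [CharZero R] (hD : IsLND D) {s : R} (hs : D s ≠ 0) :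
    Disjoint (Ideal.span {s} : Set R) (kerNonZeroDivisors D) := by
  rw [Set.disjoint_left]
  rintro _ hy hker
  obtain ⟨c, rfl⟩ := Ideal.mem_span_singleton'.1 hy
  obtain ⟨hDcs, hcs⟩ := mem_kerNonZeroDivisors.1 hker
  obtain ⟨l, hl⟩ := exists_hasDegree (right_ne_zero_of_mul hcs) (hD.exists_iterate_eq_zero s)
  obtain ⟨m, hm⟩ := exists_hasDegree (left_ne_zero_of_mul hcs) (hD.exists_iterate_eq_zero c)
  obtain ⟨l, rfl, -⟩ := hl.eq_add_one hs
  have h0 : HasDegree D (c * s) 0 := ⟨hcs, hDcs⟩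
  exact absurd (h0.unique (hm.mul hl)) (by lia)

end LocallyNilpotent

section HeightOne

lemma heightOne_of_mem_minimalPrimes {R : Type*} [CommRing R] [IsDomain R] [IsNoetherianRing R]
    {t : R} {p : Ideal R} (hp : p ∈ (Ideal.span {t}).minimalPrimes) (hp0 : p ≠ ⊥) :
    heightOne p := by
  refine ⟨hp.1.1, ⟨⊥, Ideal.isPrime_bot, bot_lt_iff_ne_bot.2 hp0⟩, fun q r _ _ hqr hrp ↦ ?_⟩
  have _ := hp.1.1
  have h : (2 : ℕ∞) ≤ 1 := calc
    (2 : ℕ∞) ≤ q.height + 1 + 1 := by rw [add_assoc, one_add_one_eq_two]; exact le_add_self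
    _ ≤ r.height + 1 := by gcongr; exact Ideal.height_add_one_le_of_lt_of_isPrime hqr
    _ ≤ p.height := Ideal.height_add_one_le_of_lt_of_isPrime hrp
    _ ≤ 1 := Ideal.height_le_one_of_isPrincipal_of_mem_minimalPrimes _ p hp
  exact absurd h (by norm_num)

lemma exists_heightOne_disjoint {R : Type*} [CommRing R] [IsDomain R] [IsNoetherianRing R]
    {s : R} (hs : s ≠ 0) {S : Submonoid R} (h : Disjoint (Ideal.span {s} : Set R) S) :
    ∃ p : Ideal R, heightOne p ∧ s ∈ p ∧ Disjoint (p : Set R) S := by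
  obtain ⟨P, hP, hsP, hPS⟩ := Ideal.exists_le_prime_disjoint _ _ h
  obtain ⟨p, hpmin, hpP⟩ := Ideal.exists_minimalPrimes_le hsP
  have hsp : s ∈ p := hpmin.1.2 (Ideal.mem_span_singleton_self s)
  have hp0 : p ≠ ⊥ := by rintro rfl; exact hs hsp
  exact ⟨p, heightOne_of_mem_minimalPrimes hpmin hp0, hsp, hPS.mono_left hpP⟩

lemma exists_isPrime_colon_ge {R M : Type*} [CommRing R] [IsNoetherianRing R] [AddCommGroup M]
    [Module R M] (N : Submodule R M) {z : M} (hz : z ∉ N) :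
    ∃ w : M, (N.colon {w}).IsPrime ∧ N.colon {z} ≤ N.colon {w} := by
  have hcolon : ∀ w : M, (⊥ : Submodule R (M ⧸ N)).colon {N.mkQ w} = N.colon {w} := fun w ↦ by
    ext r
    rw [Submodule.mem_colon_singleton, Submodule.mem_colon_singleton, Submodule.mem_bot,
      ← map_smul, Submodule.mkQ_apply, Submodule.Quotient.mk_eq_zero]
  have hne : N.mkQ z ≠ 0 := by rwa [Submodule.mkQ_apply, Ne, Submodule.Quotient.mk_eq_zero]
  obtain ⟨P, hP, hzP⟩ := exists_le_isAssociatedPrime_of_isNoetherianRing R (N.mkQ z) hne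
  obtain ⟨hprime, x, rfl⟩ := isAssociatedPrime_iff.1 hP
  obtain ⟨w, rfl⟩ := N.mkQ_surjective x
  simp only [hcolon] at hprime hzP
  exact ⟨w, hprime, hzP⟩

variable {R K : Type*} [CommRing R] [Field K] [Algebra R K]

lemma mem_colon_one_singleton {w : K} {y : R} :
    y ∈ (1 : Submodule R K).colon {w} ↔ ∃ c : R, algebraMap R K c = y • w := by
  rw [Submodule.mem_colon_singleton, Submodule.mem_one]

variable [IsDomain R] [IsFractionRing R K]

lemma colon_one_ne_bot (w : K) : (1 : Submodule R K).colon {w} ≠ ⊥ := by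
  obtain ⟨a, b, hb, rfl⟩ := IsFractionRing.div_surjective (A := R) w
  have hb0 : b ≠ 0 := nonZeroDivisors.ne_zero hb
  have hbK : algebraMap R K b ≠ 0 := by simpa using hb0
  refine (Submodule.ne_bot_iff _).2 ⟨b, mem_colon_one_singleton.2 ⟨a, ?_⟩, hb0⟩
  rw [Algebra.smul_def, mul_div_cancel₀ _ hbK]

variable [IsNoetherianRing R] [IsIntegrallyClosed R]

lemma exists_smul_eq_notMem_colon {w : K} (hp : (1 : Submodule R K).colon {w} ≠ ⊤) :
    ∃ t ∈ (1 : Submodule R K).colon {w}, ∃ c ∉ (1 : Submodule R K).colon {w},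
      algebraMap R K c = t • w := by
  set p := (1 : Submodule R K).colon {w}
  by_contra! hmaps
  have hp0 : Submodule.map (Algebra.linearMap R K) p ≠ ⊥ :=
    ((Submodule.map_injective_of_injective (f := Algebra.linearMap R K)
      (IsFractionRing.injective R K)).ne_iff' (Submodule.map_bot _)).2 (colon_one_ne_bot w)
  -- Otherwise `w` stabilizes a nonzero finitely generated submodule, hence is integral.
  have hw_integral : IsIntegral R w := by
    refine isIntegral_of_smul_mem_submodule _ hp0 (.map _ (IsNoetherian.noetherian p)) w ?_
    rintro _ ⟨t, ht, rfl⟩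
    obtain ⟨c, hc⟩ := mem_colon_one_singleton.1 ht
    refine ⟨c, by_contra fun hcp ↦ hmaps t ht c hcp hc, ?_⟩
    rw [Algebra.linearMap_apply, hc, Algebra.linearMap_apply, Algebra.smul_def, smul_eq_mul,
      mul_comm]
  obtain ⟨c, hc⟩ := IsIntegrallyClosed.isIntegral_iff.1 hw_integral
  exact hp ((Ideal.eq_top_iff_one _).2 (mem_colon_one_singleton.2 ⟨c, by rw [hc, one_smul]⟩))

lemma heightOne_colon_one {w : K} (hp : ((1 : Submodule R K).colon {w}).IsPrime) :
    heightOne ((1 : Submodule R K).colon {w}) := by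
  obtain ⟨t, ht, c, hcp, hc⟩ := exists_smul_eq_notMem_colon hp.ne_top
  refine heightOne_of_mem_minimalPrimes (t := t) ⟨⟨hp, ?_⟩, ?_⟩ (colon_one_ne_bot w)
  · rwa [Ideal.span_singleton_le_iff_mem]
  · rintro r ⟨hr, htr⟩ hrp y hy
    rw [Ideal.span_singleton_le_iff_mem] at htr
    obtain ⟨c', hc'⟩ := mem_colon_one_singleton.1 hy
    have hyc : y * c = t * c' := by
      apply IsFractionRing.injective R K
      rw [map_mul, map_mul, hc, hc', Algebra.smul_def, Algebra.smul_def]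
      ring
    have hycr : y * c ∈ r := hyc ▸ r.mul_mem_right _ htr
    exact (hr.mem_or_mem hycr).resolve_right fun h ↦ hcp (hrp h)

lemma exists_algebraMap_eq_of_heightOne {z : K}
    (h : ∀ p : Ideal R, heightOne p → ∃ e ∉ p, ∃ y : R, algebraMap R K y = e • z) :
    ∃ y : R, algebraMap R K y = z := by
  by_contra hz
  obtain ⟨w, hw, hzw⟩ := exists_isPrime_colon_ge (1 : Submodule R K) (Submodule.mem_one.not.2 hz)
  obtain ⟨e, he, hy⟩ := h _ (heightOne_colon_one hw)
  exact he (hzw (mem_colon_one_singleton.2 hy))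

end HeightOne

section Extension

variable {A B : Type*} [CommRing A] [CommRing B] [Algebra A B]

lemma exists_derivation_semiconj_of_formallyEtale [Algebra.FormallyEtale A B]
    (D : Derivation ℤ A A) :
    ∃ E : Derivation ℤ B B, Function.Semiconj (algebraMap A B) D E := by
  let f : TensorProduct A B (KaehlerDifferential ℤ A) →ₗ[B] B :=
    TensorProduct.AlgebraTensorModule.lift
      (LinearMap.toSpanSingleton B _ ((Algebra.linearMap A B).comp D.liftKaehlerDifferential))
  let g := f.comp (KaehlerDifferential.tensorKaehlerEquivOfFormallyEtale ℤ A B).symm.toLinearMap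
  exact ⟨g.compDer (KaehlerDifferential.D ℤ B), fun r ↦ by
    simp [g, f, KaehlerDifferential.tensorKaehlerEquivOfFormallyEtale_symm_D_algebraMap]⟩

lemma exists_derivation_semiconj_of_forall_exists [FaithfulSMul A B] (F : Derivation ℤ B B)
    (h : ∀ x : A, ∃ y : A, algebraMap A B y = F (algebraMap A B x)) :
    ∃ E : Derivation ℤ A A, Function.Semiconj (algebraMap A B) E F := by
  have hinj := FaithfulSMul.algebraMap_injective A B
  choose f hf using h
  let E : A →+ A :=
    { toFun := f
      map_zero' := hinj (by simp [hf])
      map_add' := fun x y ↦ hinj (by simp [hf]) }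
  exact ⟨Derivation.mk' E.toIntLinearMap fun x y ↦ hinj (by simp [E, hf]), hf⟩

end Extension

lemma formallyEtale_of_isAlgebraic (R K : Type*) [CommRing R] [IsDomain R] [Field K] [CharZero K]
    [Algebra R K] [FaithfulSMul R K] [Algebra.IsAlgebraic R K] : Algebra.FormallyEtale R K := by
  let : Algebra (FractionRing R) K := FractionRing.liftAlgebra R K
  have : IsScalarTower R (FractionRing R) K := FractionRing.isScalarTower_liftAlgebra R K
  have : Algebra.IsAlgebraic (FractionRing R) K :=
    (IsFractionRing.comap_isAlgebraic_iff (A := R) (K := FractionRing R) (C := K)).1 inferInstance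
  have : CharZero (FractionRing R) :=
    (RingHom.charZero_iff (algebraMap (FractionRing R) K).injective).2 inferInstance
  have : Algebra.FormallyEtale (FractionRing R) K := Algebra.FormallyEtale.of_isSeparable _ _
  have : Algebra.FormallyEtale R (FractionRing R) :=
    Algebra.FormallyEtale.of_isLocalization (nonZeroDivisors R)
  exact Algebra.FormallyEtale.comp R (FractionRing R) K


section Degrees

variable {G : Type*} [AddCommGroup G]

lemma exists_mem_add_mem_of_mem_closure (M : AddSubmonoid G) (H : AddSubgroup G)
    (hM : ∀ m ∈ M, ∃ n : ℕ, 0 < n ∧ n • m ∈ H) {g : G}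
    (hg : g ∈ AddSubgroup.closure (M : Set G)) : ∃ m ∈ M, m + g ∈ H := by
  suffices h : ∀ g ∈ AddSubgroup.closure (M : Set G), ∃ m ∈ M, m - g ∈ H by
    simpa only [sub_neg_eq_add] using h (-g) (neg_mem hg)
  intro g hg
  induction hg using AddSubgroup.closure_induction with
  | mem x hx => exact ⟨x, hx, by simp⟩
  | zero => exact ⟨0, zero_mem _, by simp⟩
  | add x y _ _ hx hy =>
    obtain ⟨m, hm, hmx⟩ := hx
    obtain ⟨n, hn, hny⟩ := hy
    exact ⟨m + n, add_mem hm hn, by rw [add_sub_add_comm]; exact add_mem hmx hny⟩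
  | neg x _ hx =>
    obtain ⟨m, hm, hmx⟩ := hx
    obtain ⟨n, hn, hnm⟩ := hM m hm
    obtain ⟨n, rfl⟩ := Nat.exists_eq_add_one.2 hn
    have heq : n • m - -x = (n + 1) • m - (m - x) := by rw [succ_nsmul]; abel
    exact ⟨n • m, nsmul_mem hm n, heq ▸ sub_mem hnm hmx⟩

variable {B : Type*} [CommRing B] (𝒜 : G → AddSubgroup B)

lemma mem_Gsub_of_mem {i : G} {x : B} (hx : x ∈ 𝒜 i) (hx0 : x ≠ 0) : i ∈ Gsub 𝒜 :=
  AddSubgroup.subset_closure fun h ↦ hx0 (by rwa [h, AddSubgroup.mem_bot] at hx)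

lemma mem_verSub_of_mem {H : AddSubgroup G} {i : G} {x : B} (hi : i ∈ H) (hx : x ∈ 𝒜 i) :
    x ∈ verSub 𝒜 H :=
  Subring.subset_closure (Set.mem_biUnion (x := i) hi hx)

lemma Gsub_le_Mbar (hsat : Gbar 𝒜 = Gsub 𝒜) {p : Ideal B} (hp : heightOne p) :
    Gsub 𝒜 ≤ Mbar 𝒜 p := by
  rw [← hsat, Gbar, if_pos ⟨p, hp⟩]
  exact iInf_le (fun p : {p : Ideal B // heightOne p} ↦ Mbar 𝒜 p.1) ⟨p, hp⟩

variable [SetLike.GradedMonoid 𝒜]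

/-- The submonoid of `G` formed by the degrees of the homogeneous elements of a multiplicative set
`S`. It is `𝕄(B, p)` when `S` is the complement of a prime ideal `p`. -/
def homogDegrees (S : Submonoid B) : AddSubmonoid G where
  carrier := {i | ∃ x ∈ 𝒜 i, x ∈ S}
  zero_mem' := ⟨1, SetLike.one_mem_graded 𝒜, S.one_mem⟩
  add_mem' := by
    rintro i j ⟨x, hx, hxS⟩ ⟨y, hy, hyS⟩
    exact ⟨x * y, SetLike.mul_mem_graded hx hy, S.mul_mem hxS hyS⟩

lemma closure_homogDegrees_primeCompl (p : Ideal B) [p.IsPrime] :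
    AddSubgroup.closure (homogDegrees 𝒜 p.primeCompl : Set G) = Mbar 𝒜 p :=
  congrArg AddSubgroup.closure (Set.ext fun _ ↦ Set.not_subset.symm)

lemma exists_mem_add_mem_of_mem_closure_homogDegrees {H : AddSubgroup G} (hH : Tmem 𝒜 H)
    {S : Submonoid B} (hS : 0 ∉ S) {g : G}
    (hg : g ∈ AddSubgroup.closure (homogDegrees 𝒜 S : Set G)) :
    ∃ m, ∃ u ∈ 𝒜 m, u ∈ S ∧ m + g ∈ H := by
  obtain ⟨m, ⟨u, hum, huS⟩, hmg⟩ := exists_mem_add_mem_of_mem_closure (homogDegrees 𝒜 S) H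
    (fun m ⟨u, hum, huS⟩ ↦ hH m (mem_Gsub_of_mem 𝒜 hum (ne_of_mem_of_not_mem huS hS))) hg
  exact ⟨m, u, hum, huS, hmg⟩

variable {𝒜} in
lemma Tmem.exists_pow_mem_verSub {H : AddSubgroup G} (hH : Tmem 𝒜 H) {i : G} {x : B}
    (hx : x ∈ 𝒜 i) : ∃ n : ℕ, n ≠ 0 ∧ x ^ n ∈ verSub 𝒜 H := by
  by_cases hx0 : x = 0
  · exact ⟨1, one_ne_zero, by rw [hx0, pow_one]; exact zero_mem _⟩
  · obtain ⟨n, hn, hni⟩ := hH i (mem_Gsub_of_mem 𝒜 hx hx0)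
    exact ⟨n, hn.ne', mem_verSub_of_mem 𝒜 hni (SetLike.pow_mem_graded n hx)⟩

variable {𝒜} in
lemma Tmem.isIntegral_verSub [DecidableEq G] [DirectSum.Decomposition 𝒜] {H : AddSubgroup G}
    (hH : Tmem 𝒜 H) : Algebra.IsIntegral (verSub 𝒜 H) B := by
  refine ⟨fun x ↦ ?_⟩
  induction x using DirectSum.Decomposition.inductionOn 𝒜 with
  | zero => exact isIntegral_zero
  | homogeneous x =>
    obtain ⟨n, hn, hxn⟩ := hH.exists_pow_mem_verSub x.2
    exact .of_pow (Nat.pos_of_ne_zero hn) (isIntegral_algebraMap (x := (⟨_, hxn⟩ : verSub 𝒜 H)))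
  | add x y hx hy => exact hx.add hy

end Degrees

section HomogeneousDerivation

variable {G : Type*} [AddCommGroup G] {B : Type*} [CommRing B] (𝒜 : G → AddSubgroup B)

/-- `D` is homogeneous of degree `d`. -/
def IsHomogDerOfDegree (D : Derivation ℤ B B) (d : G) : Prop :=
  ∀ (i : G) (x : B), x ∈ 𝒜 i → D x ∈ 𝒜 (i + d)

variable {𝒜} {D : Derivation ℤ B B} {d : G}

namespace IsHomogDerOfDegree

lemma degree_mem_Gsub (hd : IsHomogDerOfDegree 𝒜 D d) {i : G} {x : B} (hx : x ∈ 𝒜 i)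
    (hDx : D x ≠ 0) : d ∈ Gsub 𝒜 := by
  have hx0 : x ≠ 0 := by rintro rfl; exact hDx (map_zero D)
  simpa only [add_sub_cancel_left] using
    sub_mem (mem_Gsub_of_mem 𝒜 (hd i x hx) hDx) (mem_Gsub_of_mem 𝒜 hx hx0)

lemma exists_iterate_mem (hd : IsHomogDerOfDegree 𝒜 D d) {i : G} {x : B} (hx : x ∈ 𝒜 i) (n : ℕ) :
    ∃ j, D^[n] x ∈ 𝒜 j := by
  induction n with
  | zero => exact ⟨i, hx⟩
  | succ n ih =>
    obtain ⟨j, hj⟩ := ih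
    exact ⟨j + d, by rw [Function.iterate_succ_apply']; exact hd _ _ hj⟩

lemma smul [SetLike.GradedMonoid 𝒜] (hd : IsHomogDerOfDegree 𝒜 D d) {a : B} {m : G}
    (ha : a ∈ 𝒜 m) : IsHomogDerOfDegree 𝒜 (a • D) (m + d) := fun i x hx ↦ by
  rw [add_left_comm]
  exact SetLike.mul_mem_graded ha (hd i x hx)

lemma apply_mem_verSub (hd : IsHomogDerOfDegree 𝒜 D d) {H : AddSubgroup G} (hdH : d ∈ H) {x : B}
    (hx : x ∈ verSub 𝒜 H) : D x ∈ verSub 𝒜 H := by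
  induction hx using Subring.closure_induction with
  | mem x hx =>
    obtain ⟨i, hi, hxi⟩ := Set.mem_iUnion₂.1 hx
    exact mem_verSub_of_mem 𝒜 (add_mem hi hdH) (hd i x hxi)
  | zero => rw [map_zero]; exact zero_mem _
  | one => rw [Derivation.map_one_eq_zero]; exact zero_mem _
  | add x y _ _ hx hy => rw [map_add]; exact add_mem hx hy
  | neg x _ hx => rw [map_neg]; exact neg_mem hx
  | mul x y hx hy hDx hDy =>
    rw [Derivation.leibniz]
    exact add_mem (mul_mem hx hDy) (mul_mem hy hDx)

end IsHomogDerOfDegree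

variable [DecidableEq G] [GradedRing 𝒜]

lemma exists_homogeneous_derivation_ne_zero (hD : D ≠ 0) : ∃ i, ∃ x ∈ 𝒜 i, D x ≠ 0 := by
  contrapose! hD
  ext x
  induction x using DirectSum.Decomposition.inductionOn 𝒜 with
  | zero => rw [map_zero, map_zero]
  | homogeneous x => exact hD _ _ x.2
  | add x y hx hy => rw [map_add, map_add, hx, hy]

lemma IsLND.of_homogeneous (h : ∀ i, ∀ x ∈ 𝒜 i, ∃ n, D^[n] x = 0) : IsLND D := by
  refine .of_exists_iterate_eq_zero fun b ↦ ?_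
  induction b using DirectSum.Decomposition.inductionOn 𝒜 with
  | zero => exact ⟨0, rfl⟩
  | homogeneous x => exact h _ _ x.2
  | add x y hx hy =>
    obtain ⟨m, hm⟩ := hx
    obtain ⟨n, hn⟩ := hy
    exact ⟨m + n, by rw [iterate_map_add, iterate_eq_zero_of_le D (Nat.le_add_right m n) hm,
      iterate_eq_zero_of_le D (Nat.le_add_left n m) hn, add_zero]⟩

lemma IsHomogDerOfDegree.exists_homogeneous_slice (hd : IsHomogDerOfDegree 𝒜 D d) (hD : IsLND D)
    (hD0 : D ≠ 0) : ∃ j, ∃ s ∈ 𝒜 j, D s ≠ 0 ∧ D (D s) = 0 := by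
  obtain ⟨i, x, hx, hDx⟩ := exists_homogeneous_derivation_ne_zero (𝒜 := 𝒜) hD0
  obtain ⟨m, hm, hm'⟩ := exists_hasDegree hDx (hD.exists_iterate_eq_zero (D x))
  obtain ⟨j, hj⟩ := hd.exists_iterate_mem hx m
  refine ⟨j, D^[m] x, hj, ?_, ?_⟩
  · rwa [← Function.iterate_succ_apply' D m x, Function.iterate_succ_apply]
  · rwa [← Function.iterate_succ_apply' D m x, ← Function.iterate_succ_apply' D (m + 1) x,
      Function.iterate_succ_apply]

lemma mem_of_mul_mem_graded [IsDomain B] {i j : G} {x y : B} (hx : x ∈ 𝒜 i) (hx0 : x ≠ 0)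
    (hxy : x * y ∈ 𝒜 (i + j)) : y ∈ 𝒜 j := by
  have h := DirectSum.coe_decompose_mul_add_of_left_mem 𝒜 (j := j) (b := y) hx
  rw [DirectSum.decompose_of_mem_same 𝒜 hxy] at h
  exact mul_left_cancel₀ hx0 h ▸ SetLike.coe_mem _

lemma derivation_mem_graded_of_pow [IsDomain B] [CharZero B] {i : G} {x : B} (hx : x ∈ 𝒜 i) {n : ℕ}
    (hn : n ≠ 0) (h : D (x ^ n) ∈ 𝒜 (n • i + d)) : D x ∈ 𝒜 (i + d) := by
  by_cases hx0 : x = 0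
  · rw [hx0, map_zero]
    exact zero_mem _
  obtain ⟨n, rfl⟩ := Nat.exists_eq_add_one_of_ne_zero hn
  have hmem : ((n + 1 : ℕ) : B) * x ^ n ∈ 𝒜 (n • i) := by
    simpa only [zero_add] using
      SetLike.mul_mem_graded (SetLike.natCast_mem_graded 𝒜 _) (SetLike.pow_mem_graded n hx)
  refine mem_of_mul_mem_graded hmem (mul_ne_zero (Nat.cast_ne_zero.2 hn) (pow_ne_zero n hx0)) ?_
  rwa [Derivation.leibniz_pow, Nat.add_sub_cancel, nsmul_eq_mul, smul_eq_mul, ← mul_assoc,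
    succ_nsmul, add_assoc] at h

end HomogeneousDerivation

section Descent

variable {G : Type*} [AddCommGroup G] {B : Type*} [CommRing B] [IsDomain B] [CharZero B]
  {𝒜 : G → AddSubgroup B} {D : Derivation ℤ B B} {d : G}

/-- Modulo `s ∈ p`, the element `c` is a nonzero rational multiple of `(D s)ⁿ * b`. -/
lemma IsHomogDerOfDegree.exists_mem_ker_notMem [SetLike.GradedMonoid 𝒜]
    (hd : IsHomogDerOfDegree 𝒜 D d) {s : B} {j : G} (hs : s ∈ 𝒜 j) (hDs : D s ≠ 0)
    (hDDs : D (D s) = 0) {p : Ideal B} (hp : p.IsPrime) (hsp : s ∈ p)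
    (hker : Disjoint (p : Set B) (kerNonZeroDivisors D)) {i : G} {b : B} (hb : b ∈ 𝒜 i)
    (hbp : b ∉ p) {m : ℕ} (hm : D^[m + 1] b = 0) :
    ∃ n : ℕ, ∃ c ∈ 𝒜 (n • (j + d) + i), D c = 0 ∧ c ∉ p := by
  induction m generalizing i b with
  | zero => exact ⟨0, b, by rwa [zero_nsmul, zero_add], hm, hbp⟩
  | succ m ih =>
    have hnotMem : ∀ x, D x = 0 → x ≠ 0 → x ∉ p := fun x hx hx0 hxp ↦
      Set.disjoint_left.1 hker hxp (mem_kerNonZeroDivisors.2 ⟨hx, hx0⟩)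
    have hmem : (m + 1) • (D s * b) - s * D b ∈ 𝒜 (j + d + i) := by
      refine sub_mem (nsmul_mem (SetLike.mul_mem_graded (hd j s hs) hb) _) ?_
      rw [add_assoc, add_comm d]
      exact SetLike.mul_mem_graded hs (hd i b hb)
    have hmem_p : (m + 1) • (D s * b) - s * D b ∉ p := by
      rw [p.sub_mem_iff_left (p.mul_mem_right _ hsp), nsmul_eq_mul]
      exact hp.mul_notMem (hnotMem _ (D.map_natCast _) (Nat.cast_ne_zero.2 m.succ_ne_zero))
        (hp.mul_notMem (hnotMem _ hDDs hDs) hbp)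
    obtain ⟨n, c, hc, hDc, hcp⟩ := ih hmem hmem_p (iterate_slice_correction D hDDs hm)
    exact ⟨n + 1, c, by rwa [succ_nsmul, add_assoc], hDc, hcp⟩

variable [DecidableEq G] [GradedRing 𝒜] [IsNoetherianRing B]

lemma IsHomogDerOfDegree.Gsub_le_closure_homogDegrees_ker (hd : IsHomogDerOfDegree 𝒜 D d)
    (hD : IsLND D) (hD0 : D ≠ 0) (hsat : Gbar 𝒜 = Gsub 𝒜) :
    Gsub 𝒜 ≤ AddSubgroup.closure (homogDegrees 𝒜 (kerNonZeroDivisors D) : Set G) := by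
  obtain ⟨j, s, hs, hDs, hDDs⟩ := hd.exists_homogeneous_slice hD hD0
  have hs0 : s ≠ 0 := by rintro rfl; exact hDs (map_zero D)
  obtain ⟨p, hp, hsp, hker⟩ :=
    exists_heightOne_disjoint hs0 (hD.disjoint_span_kerNonZeroDivisors hDs)
  refine (Gsub_le_Mbar 𝒜 hsat hp).trans ((AddSubgroup.closure_le _).2 fun i hi ↦ ?_)
  obtain ⟨b, hb, hbp⟩ := Set.not_subset.1 hi
  obtain ⟨m, hm⟩ := hD.exists_iterate_eq_zero b
  obtain ⟨n, c, hc, hDc, hcp⟩ := hd.exists_mem_ker_notMem hs hDs hDDs hp.1 hsp hker hb hbp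
    (iterate_eq_zero_of_le D m.le_succ hm)
  have hc0 : c ≠ 0 := by rintro rfl; exact hcp p.zero_mem
  have hDs_deg : j + d ∈ AddSubgroup.closure (homogDegrees 𝒜 (kerNonZeroDivisors D) : Set G) :=
    AddSubgroup.subset_closure ⟨D s, hd j s hs, mem_kerNonZeroDivisors.2 ⟨hDDs, hDs⟩⟩
  have hc_deg : n • (j + d) + i ∈
      AddSubgroup.closure (homogDegrees 𝒜 (kerNonZeroDivisors D) : Set G) :=
    AddSubgroup.subset_closure ⟨c, hc, mem_kerNonZeroDivisors.2 ⟨hDc, hc0⟩⟩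
  exact (add_mem_cancel_left (nsmul_mem hDs_deg n)).1 hc_deg

lemma mem_Xset_of_isLND (hD : IsLND D) (hDh : IsHomogDer 𝒜 D) (hD0 : D ≠ 0)
    (hsat : Gbar 𝒜 = Gsub 𝒜) {H : AddSubgroup G} (hH : Tmem 𝒜 H) : H ∈ Xset 𝒜 := by
  obtain ⟨d, hd⟩ := hDh
  replace hd : IsHomogDerOfDegree 𝒜 D d := hd
  obtain ⟨i, x, hx, hDx⟩ := exists_homogeneous_derivation_ne_zero (𝒜 := 𝒜) hD0
  obtain ⟨m, a, ha, haker, hmd⟩ := exists_mem_add_mem_of_mem_closure_homogDegrees 𝒜 hH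
    (fun h ↦ (mem_kerNonZeroDivisors.1 h).2 rfl)
    (hd.Gsub_le_closure_homogDegrees_ker hD hD0 hsat (hd.degree_mem_Gsub hx hDx))
  obtain ⟨hDa, ha0⟩ := mem_kerNonZeroDivisors.1 haker
  have hda := hd.smul ha
  obtain ⟨E, hE⟩ := exists_derivation_semiconj_of_forall_exists (A := verSub 𝒜 H) (a • D)
    fun x ↦ ⟨⟨_, hda.apply_mem_verSub hmd x.2⟩, rfl⟩
  refine ⟨hH, E, (hD.smul_of_eq_zero hDa).of_semiconj (f := (verSub 𝒜 H).subtype)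
    Subtype.val_injective hE, ⟨m + d, fun i x hx ↦ ?_⟩, ?_⟩
  · have hEx : (E x : B) = (a • D) x := hE x
    exact hEx ▸ hda i x hx
  · rintro rfl
    have hx0 : x ≠ 0 := by rintro rfl; exact hDx (map_zero D)
    obtain ⟨n, hn, hni⟩ := hH i (mem_Gsub_of_mem 𝒜 hx hx0)
    have hEx := hE ⟨x ^ n, mem_verSub_of_mem 𝒜 hni (SetLike.pow_mem_graded n hx)⟩
    exact mul_ne_zero ha0 (derivation_pow_ne_zero hn.ne' hDx) hEx.symm

end Descent

section Ascent

lemma smul_derivation_eq_of_semiconj {A B C : Type*} [CommRing A] [CommRing B] [CommRing C]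
    [Algebra A B] [Algebra B C] [Algebra A C] [IsScalarTower A B C] {D : Derivation ℤ A A}
    {F : Derivation ℤ C C} (hF : Function.Semiconj (algebraMap A C) D F) {u x : B} {n : ℕ}
    {r s : A} (hr : algebraMap A B r = u * x) (hs : algebraMap A B s = u ^ (n + 1)) :
    ((n + 1 : ℕ) * u ^ (n + 1)) • F (algebraMap B C x) = algebraMap B C
      ((n + 1 : ℕ) * u ^ n * algebraMap A B (D r) - x * algebraMap A B (D s)) := by
  have hDr := hF r
  have hDs := hF s
  rw [IsScalarTower.algebraMap_apply A B C, IsScalarTower.algebraMap_apply A B C r, hr, map_mul,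
    Derivation.leibniz, smul_eq_mul, smul_eq_mul] at hDr
  rw [IsScalarTower.algebraMap_apply A B C, IsScalarTower.algebraMap_apply A B C s, hs, map_pow,
    Derivation.leibniz_pow, Nat.add_sub_cancel, smul_eq_mul, nsmul_eq_mul] at hDs
  rw [Algebra.smul_def, map_sub, map_mul, map_mul, map_mul, map_mul, hDr, hDs]
  simp only [map_natCast, map_pow]
  ring

variable {G : Type*} [AddCommGroup G] [DecidableEq G] {B : Type*} [CommRing B]
  {𝒜 : G → AddSubgroup B} [GradedRing 𝒜] {H : AddSubgroup G}
  {D : Derivation ℤ (verSub 𝒜 H) (verSub 𝒜 H)}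

section Rational

variable [Algebra ℚ B]

/-- With `u ∉ p` homogeneous and `u * x ∈ B^{(H)}`, the Leibniz rule expresses `F x` through values
of `D`, with a denominator that is a power of `u`. -/
lemma exists_notMem_smul_eq_of_semiconj {K : Type*} [CommRing K] [Algebra B K]
    {F : Derivation ℤ K K} (hF : Function.Semiconj (algebraMap (verSub 𝒜 H) K) D F)
    (hsat : Gbar 𝒜 = Gsub 𝒜) (hH : Tmem 𝒜 H) {p : Ideal B} (hp : heightOne p) {i : G} {x : B}
    (hx : x ∈ 𝒜 i) (hx0 : x ≠ 0) :
    ∃ e ∉ p, ∃ y : B, algebraMap B K y = e • F (algebraMap B K x) := by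
  have hprime : p.IsPrime := hp.1
  obtain ⟨m, u, hu, hup, hmi⟩ := exists_mem_add_mem_of_mem_closure_homogDegrees 𝒜 hH
    (S := p.primeCompl) (fun h ↦ h p.zero_mem) (g := i) <| by
      rw [closure_homogDegrees_primeCompl]
      exact Gsub_le_Mbar 𝒜 hsat hp (mem_Gsub_of_mem 𝒜 hx hx0)
  obtain ⟨n, hn, hun⟩ := hH.exists_pow_mem_verSub hu
  obtain ⟨n, rfl⟩ := Nat.exists_eq_add_one_of_ne_zero hn
  have hunit : IsUnit ((n + 1 : ℕ) : B) := by
    simpa using (Nat.cast_ne_zero (R := ℚ).2 hn).isUnit.map (algebraMap ℚ B)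
  refine ⟨(n + 1 : ℕ) * u ^ (n + 1), ?_, _, (smul_derivation_eq_of_semiconj hF
    (r := ⟨u * x, mem_verSub_of_mem 𝒜 hmi (SetLike.mul_mem_graded hu hx)⟩)
    (s := ⟨u ^ (n + 1), hun⟩) rfl rfl).symm⟩
  rw [Ideal.unit_mul_mem_iff_mem p hunit]
  exact fun h ↦ hup (hprime.mem_of_pow_mem _ h)

lemma exists_derivation_semiconj_verSub [IsDomain B] [IsNoetherianRing B] [IsIntegrallyClosed B]
    (hsat : Gbar 𝒜 = Gsub 𝒜) (hH : Tmem 𝒜 H) (D : Derivation ℤ (verSub 𝒜 H) (verSub 𝒜 H)) :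
    ∃ E : Derivation ℤ B B, Function.Semiconj (algebraMap (verSub 𝒜 H) B) D E := by
  let K := FractionRing B
  have hinj : Function.Injective (algebraMap B K) := IsFractionRing.injective B K
  have : CharZero B := algebraRat.charZero B
  have : CharZero K := charZero_of_injective_algebraMap hinj
  have : FaithfulSMul (verSub 𝒜 H) K :=
    (faithfulSMul_iff_algebraMap_injective _ _).2 (hinj.comp Subtype.val_injective)
  have := hH.isIntegral_verSub
  have : Algebra.IsAlgebraic (verSub 𝒜 H) K :=
    (IsFractionRing.isAlgebraic_iff' (verSub 𝒜 H) B K).1 inferInstance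
  have := formallyEtale_of_isAlgebraic (verSub 𝒜 H) K
  obtain ⟨F, hF⟩ := exists_derivation_semiconj_of_formallyEtale (B := K) D
  have hFB : ∀ x : B, ∃ y : B, algebraMap B K y = F (algebraMap B K x) := fun x ↦ by
    induction x using DirectSum.Decomposition.inductionOn 𝒜 with
    | zero => exact ⟨0, by rw [map_zero, map_zero]⟩
    | homogeneous x =>
      by_cases hx0 : (x : B) = 0
      · exact ⟨0, by rw [hx0, map_zero, map_zero]⟩
      · exact exists_algebraMap_eq_of_heightOne fun p hp ↦
          exists_notMem_smul_eq_of_semiconj hF hsat hH hp x.2 hx0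
    | add x y hx hy =>
      obtain ⟨a, ha⟩ := hx
      obtain ⟨b, hb⟩ := hy
      exact ⟨a + b, by rw [map_add, map_add, map_add, ha, hb]⟩
  obtain ⟨E, hE⟩ := exists_derivation_semiconj_of_forall_exists F hFB
  exact ⟨E, fun r ↦ hinj ((hF r).trans (hE _).symm)⟩

end Rational

variable [IsDomain B] [CharZero B] {E : Derivation ℤ B B} {d : G}

lemma isHomogDerOfDegree_of_semiconj (hE : Function.Semiconj (algebraMap (verSub 𝒜 H) B) D E)
    (hH : Tmem 𝒜 H)
    (hd : ∀ (i : G) (x : verSub 𝒜 H), (x : B) ∈ 𝒜 i → (D x : B) ∈ 𝒜 (i + d)) :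
    IsHomogDerOfDegree 𝒜 E d := fun i x hx ↦ by
  obtain ⟨n, hn, hxn⟩ := hH.exists_pow_mem_verSub hx
  refine derivation_mem_graded_of_pow hx hn ?_
  have hExn : (D ⟨x ^ n, hxn⟩ : B) = E (x ^ n) := hE ⟨x ^ n, hxn⟩
  exact hExn ▸ hd _ ⟨x ^ n, hxn⟩ (SetLike.pow_mem_graded n hx)

lemma IsHomogDerOfDegree.exists_iterate_eq_zero_of_nsmul_mem (hEd : IsHomogDerOfDegree 𝒜 E d)
    (hE : Function.Semiconj (algebraMap (verSub 𝒜 H) B) D E) (hD : IsLND D) {n : ℕ} (hn : n ≠ 0)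
    (hnd : n • d ∈ H) {i : G} (hni : n • i ∈ H) {x : B} (hx : x ∈ 𝒜 i) : ∃ m, E^[m] x = 0 := by
  refine exists_iterate_eq_zero_of_pow (S := {b | ∃ j, b ∈ 𝒜 j ∧ n • j ∈ H}) ?_ hn ?_ ⟨i, hx, hni⟩
  · rintro b ⟨j, hb, hnj⟩
    exact ⟨j + d, hEd j b hb, by rw [nsmul_add]; exact add_mem hnj hnd⟩
  · rintro b ⟨j, hb, hnj⟩
    have hbn : b ^ n ∈ verSub 𝒜 H := mem_verSub_of_mem 𝒜 hnj (SetLike.pow_mem_graded n hb)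
    obtain ⟨l, hl⟩ := hD.exists_iterate_eq_zero ⟨b ^ n, hbn⟩
    have hiter := hE.iterate_right l ⟨b ^ n, hbn⟩
    rw [hl, map_zero] at hiter
    exact ⟨l, hiter.symm⟩

lemma IsHomogDerOfDegree.isLND_of_semiconj (hEd : IsHomogDerOfDegree 𝒜 E d)
    (hE : Function.Semiconj (algebraMap (verSub 𝒜 H) B) D E) (hD : IsLND D) (hH : Tmem 𝒜 H) :
    IsLND E := by
  refine IsLND.of_homogeneous (𝒜 := 𝒜) fun i x hx ↦ ?_
  by_cases hEx : E x = 0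
  · exact ⟨1, hEx⟩
  have hx0 : x ≠ 0 := by rintro rfl; exact hEx (map_zero E)
  obtain ⟨n₁, hn₁, hi⟩ := hH i (mem_Gsub_of_mem 𝒜 hx hx0)
  obtain ⟨n₂, hn₂, hd⟩ := hH d (hEd.degree_mem_Gsub hx hEx)
  refine hEd.exists_iterate_eq_zero_of_nsmul_mem hE hD (Nat.mul_pos hn₁ hn₂).ne' ?_ ?_ hx
  · rw [mul_nsmul']; exact nsmul_mem hd n₁
  · rw [mul_nsmul]; exact nsmul_mem hi n₂

end Ascent

lemma exists_isLND_of_mem_Xset {G : Type*} [AddCommGroup G] [DecidableEq G] {B : Type*} [CommRing B]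
    [IsDomain B] [IsNoetherianRing B] [IsIntegrallyClosed B] [Algebra ℚ B] {𝒜 : G → AddSubgroup B}
    [GradedRing 𝒜] (hsat : Gbar 𝒜 = Gsub 𝒜) {H : AddSubgroup G} (hX : H ∈ Xset 𝒜) :
    ∃ E : Derivation ℤ B B, IsLND E ∧ IsHomogDer 𝒜 E ∧ E ≠ 0 := by
  obtain ⟨hH, D, hD, ⟨d, hd⟩, hD0⟩ := hX
  have : CharZero B := algebraRat.charZero B
  obtain ⟨E, hE⟩ := exists_derivation_semiconj_verSub hsat hH D
  have hEd := isHomogDerOfDegree_of_semiconj hE hH hd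
  refine ⟨E, hEd.isLND_of_semiconj hE hD hH, ⟨d, hEd⟩, ?_⟩
  rintro rfl
  exact hD0 (Derivation.ext fun r ↦ Subtype.ext (hE r))

theorem Xset_empty_or_Tset_general {G : Type*} [AddCommGroup G] [DecidableEq G] {B : Type*}
    [CommRing B] [IsDomain B] [IsNoetherianRing B] [IsIntegrallyClosed B] [Algebra ℚ B]
    (𝒜 : G → AddSubgroup B) [GradedRing 𝒜] (hsat : Gbar 𝒜 = Gsub 𝒜) :
    Xset 𝒜 = ∅ ∨ Xset 𝒜 = { H : AddSubgroup G | Tmem 𝒜 H } := by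
  refine (Xset 𝒜).eq_empty_or_nonempty.imp_right fun ⟨H₀, hH₀⟩ ↦ ?_
  have : CharZero B := algebraRat.charZero B
  obtain ⟨E, hE, hEh, hE0⟩ := exists_isLND_of_mem_Xset hsat hH₀
  exact Set.Subset.antisymm (fun _ hH ↦ hH.1) fun _ hH ↦ mem_Xset_of_isLND hE hEh hE0 hsat hH

/-- Let k be a field of characteristic 0 and B a normal affine k-domain graded over k
by a finitely generated abelian group G.  If B is saturated in codimension 1 (that is,
𝔾̄(B) = 𝔾(B)), then 𝒳(B) = ∅ or 𝒳(B) = 𝕋(B). -/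
theorem Xset_empty_or_Tset
    {k : Type*} [Field k] [CharZero k]
    {G : Type*} [AddCommGroup G] [DecidableEq G] [AddGroup.FG G]
    {B : Type*} [CommRing B] [IsDomain B] [IsIntegrallyClosed B]
    [Algebra k B] [Algebra.FiniteType k B]
    (𝒜 : G → AddSubgroup B) [GradedRing 𝒜]
    (hoverk : ∀ c : k, algebraMap k B c ∈ 𝒜 0)
    (hsat : Gbar 𝒜 = Gsub 𝒜) :
    Xset 𝒜 = ∅ ∨ Xset 𝒜 = { H : AddSubgroup G | Tmem 𝒜 H } := by
  have := Algebra.FiniteType.isNoetherianRing k B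
  let : Algebra ℚ B := Algebra.compHom B (algebraMap ℚ k)
  exact Xset_empty_or_Tset_general 𝒜 hsat
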